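/- Let n ≥ 1 be an integer and let ρ be an irreducible finite-dimensional complex representation of SL(2, ℤ/nℤ) such that ρ(t) has at most three distinct eigenvalues. Then the dimension of ρ equals the number of distinct eigenvalues of ρ(t); in other words, the t-spectrum of ρ is multiplicity-free (ρ is nondegenerate). -/

import Mathlib

/-- The group `SL(2, ℤ/nℤ)`. -/
abbrev SL2 (n : ℕ) := Matrix.SpecialLinearGroup (Fin 2) (ZMod n)

/-- The element `t = [[1,1],[0,1]]` of `SL(2, ℤ/nℤ)`. -/
def tGen (n : ℕ) : SL2 n := ⟨!![1, 1; 0, 1], by simp [Matrix.det_fin_two_of]⟩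

/-- A representation is irreducible if the space is nonzero and the only invariant
subspaces are `⊥` and `⊤`. -/
def IsIrreducibleRep {G V : Type} [Group G] [AddCommGroup V] [Module ℂ V]
    (ρ : Representation ℂ G V) : Prop :=
  Nontrivial V ∧ ∀ p : Submodule ℂ V, (∀ g : G, p.map (ρ g) ≤ p) → p = ⊥ ∨ p = ⊤

/-!
A representation `ρ` of a group generated by `s` and `t` makes `End V` a representation by
conjugation, which the trace form identifies with its own dual. If `ρ` is irreducible of dimension
`d`, then Schur's lemma says that the invariants of `End V` are one-dimensional, and Scott's
inequality bounds the centralizers `C` of `ρ s`, `ρ t` and `ρ (s * t)`: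
`dim C(s) + dim C(t) + dim C(s * t) ≤ d ^ 2 + 2`.
On the other hand the centralizer of a diagonalizable map with `k` eigenvalues has dimension at
least `d ^ 2 / k`. When `s ^ 2` and `(s * t) ^ 3` are central they act as scalars, so `ρ s` has at
most two eigenvalues and `ρ (s * t)` at most three. Hence `d ^ 2 * (1 / k - 1 / 6) ≤ 2`, where `k`
is the number of eigenvalues of `ρ t`, and for `k ≤ 3` this is incompatible with `d > k`.
For `SL(2, ℤ/nℤ)` one takes the images of the standard generators of `SL(2, ℤ)`.
-/

open Module

section Reduction

open Matrix Matrix.SpecialLinearGroup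
open scoped MatrixGroups

variable {A R : Type*} [CommRing A] [CommRing R] {f : A →+* R}

lemma inv_mul_apply_zero_zero (N M : SL(2, R)) :
    (N⁻¹ * M) 0 0 = N 1 1 * M 0 0 - N 0 1 * M 1 0 := by
  simp [mul_apply, adjugate_fin_two, sub_eq_add_neg]

lemma inv_mul_apply_one_zero (N M : SL(2, R)) :
    (N⁻¹ * M) 1 0 = N 0 0 * M 1 0 - N 1 0 * M 0 0 := by
  simp [mul_apply, adjugate_fin_two, sub_eq_add_neg, add_comm]

lemma mem_range_map_of_col_eq_one_zero (hf : Function.Surjective f) {M : SL(2, R)}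
    (h₀ : M 0 0 = 1) (h₁ : M 1 0 = 0) : M ∈ (SpecialLinearGroup.map (n := Fin 2) f).range := by
  obtain ⟨k, hk⟩ := hf (M 0 1)
  have h₁₁ : M 1 1 = 1 := by simpa [-det_coe, det_fin_two, h₀, h₁] using M.det_coe
  obtain ⟨U, hU⟩ : ∃ U : SL(2, A), (U : Matrix (Fin 2) (Fin 2) A) = !![1, k; 0, 1] :=
    ⟨⟨_, by simp⟩, rfl⟩
  refine ⟨U, ?_⟩
  ext i j
  fin_cases i <;> fin_cases j <;> simp [hU, h₀, h₁, h₁₁, hk]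

lemma mem_range_map_of_isCoprime_col (hf : Function.Surjective f) {M : SL(2, R)} {a c : A}
    (hac : IsCoprime a c) (ha : M 0 0 = f a) (hc : M 1 0 = f c) :
    M ∈ (SpecialLinearGroup.map (n := Fin 2) f).range := by
  obtain ⟨N, rfl, rfl⟩ := hac.exists_SL2_col 0
  have hN : f (N 0 0) * f (N 1 1) - f (N 0 1) * f (N 1 0) = 1 := by
    rw [← map_mul, ← map_mul, ← map_sub, ← det_fin_two, N.det_coe, map_one]
  have hN_mem : SpecialLinearGroup.map f N ∈ (SpecialLinearGroup.map (n := Fin 2) f).range :=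
    ⟨N, rfl⟩
  rw [← Subgroup.mul_mem_cancel_left _ (inv_mem hN_mem)]
  apply mem_range_map_of_col_eq_one_zero hf
  · rw [inv_mul_apply_zero_zero, ha, hc]
    simp only [map_apply_coe, RingHom.mapMatrix_apply, map_apply]
    linear_combination hN
  · rw [inv_mul_apply_one_zero, ha, hc]
    simp only [map_apply_coe, RingHom.mapMatrix_apply, map_apply]
    ring

lemma mem_range_map_of_lower_left_eq_zero (hf : Function.Surjective f) {M : SL(2, R)}
    (hM : M 1 0 = 0) : M ∈ (SpecialLinearGroup.map (n := Fin 2) f).range := by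
  obtain ⟨a, ha⟩ := hf (M 0 0)
  obtain ⟨v, hv⟩ := hf (M 1 1)
  have hdet : M 0 0 * M 1 1 = 1 := by simpa [-det_coe, det_fin_two, hM] using M.det_coe
  obtain ⟨L, hL⟩ : ∃ L : SL(2, A), (L : Matrix (Fin 2) (Fin 2) A) = !![1, 0; v, 1] :=
    ⟨⟨_, by simp⟩, rfl⟩
  have hL_mem : SpecialLinearGroup.map f L ∈ (SpecialLinearGroup.map (n := Fin 2) f).range :=
    ⟨L, rfl⟩
  rw [← Subgroup.mul_mem_cancel_left _ hL_mem]
  apply mem_range_map_of_isCoprime_col hf (isCoprime_one_right (x := a))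
  · simp [hL, mul_apply, ha]
  · simp [hL, mul_apply, hM, hv, mul_comm, hdet]

lemma exists_eq_mul_and_isCoprime [IsDomain A] [IsBezout A] (a c : A) :
    ∃ g a' c' : A, a = g * a' ∧ c = g * c' ∧ IsCoprime a' c' := by
  classical
  let : GCDMonoid A := IsBezout.toGCDDomain A
  obtain ⟨a', c', ha, hc, h⟩ := extract_gcd a c
  exact ⟨gcd a c, a', c', ha, hc, (gcd_isUnit_iff a' c').mp h⟩

theorem specialLinearGroup_fin_two_map_surjective [IsDomain A] [IsBezout A]
    (hf : Function.Surjective f) :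
    Function.Surjective (SpecialLinearGroup.map (n := Fin 2) f) := by
  intro M
  obtain ⟨a, ha⟩ := hf (M 0 0)
  obtain ⟨c, hc⟩ := hf (M 1 0)
  obtain ⟨g, a', c', rfl, rfl, hac⟩ := exists_eq_mul_and_isCoprime a c
  obtain ⟨N, rfl, rfl⟩ := hac.exists_SL2_col 0
  have hN_mem : SpecialLinearGroup.map f N ∈ (SpecialLinearGroup.map (n := Fin 2) f).range :=
    ⟨N, rfl⟩
  rw [← MonoidHom.mem_range, ← Subgroup.mul_mem_cancel_left _ (inv_mem hN_mem)]
  apply mem_range_map_of_lower_left_eq_zero hf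
  rw [inv_mul_apply_one_zero, ← ha, ← hc]
  simp only [map_apply_coe, RingHom.mapMatrix_apply, map_apply, map_mul]
  ring

theorem closure_map_S_map_T_eq_top (hR : Function.Surjective (Int.castRingHom R)) :
    Subgroup.closure {(ModularGroup.S : SL(2, R)), (ModularGroup.T : SL(2, R))} = ⊤ := by
  rw [← MonoidHom.range_eq_top.mpr (specialLinearGroup_fin_two_map_surjective hR),
    MonoidHom.range_eq_map, ← SpecialLinearGroup.SL2Z_generators, MonoidHom.map_closure,
    Set.image_pair]

lemma neg_one_mem_center : (-1 : SL(2, R)) ∈ Subgroup.center SL(2, R) :=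
  Subgroup.mem_center_iff.mpr fun g => by simp

lemma map_S_sq_mem_center : (ModularGroup.S : SL(2, R)) ^ 2 ∈ Subgroup.center SL(2, R) := by
  rw [← map_pow, show ModularGroup.S ^ 2 = -1 by decide, coe_int_neg, map_one]
  exact neg_one_mem_center

lemma map_S_mul_map_T_pow_three_mem_center :
    ((ModularGroup.S : SL(2, R)) * (ModularGroup.T : SL(2, R))) ^ 3 ∈
      Subgroup.center SL(2, R) := by
  rw [← map_mul, ← map_pow, show (ModularGroup.S * ModularGroup.T) ^ 3 = -1 by decide,
    coe_int_neg, map_one]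
  exact neg_one_mem_center

end Reduction

section Centralizer

universe v

variable {K : Type*} {V : Type v} [Field K] [AddCommGroup V] [Module K V]

lemma card_sq_le_card_image_mul_card_fiberPairs {ι α : Type*} [Fintype ι] [DecidableEq α]
    (e : ι → α) :
    Fintype.card ι ^ 2 ≤
      (Finset.univ.image e).card * Fintype.card {p : ι × ι // e p.1 = e p.2} := by
  let fiber (a : α) : Finset ι := {i | e i = a}
  have hcard : Fintype.card ι = ∑ a ∈ Finset.univ.image e, (fiber a).card :=
    Finset.card_eq_sum_card_image e Finset.univ
  have hpairs : Fintype.card {p : ι × ι // e p.1 = e p.2} =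
      ∑ a ∈ Finset.univ.image e, (fiber a).card ^ 2 := by
    rw [Fintype.card_subtype, Finset.card_eq_sum_card_fiberwise (f := fun p : ι × ι => e p.1)
      (t := Finset.univ.image e) (by simp [Set.MapsTo])]
    refine Finset.sum_congr rfl fun a _ => ?_
    rw [sq, ← Finset.card_product]
    congr 1
    ext ⟨i, j⟩
    simp only [fiber, Finset.mem_filter, Finset.mem_product]
    grind
  rw [hcard, hpairs]
  exact sq_sum_le_card_mul_sum_sq

lemma card_fiberPairs_le_finrank_centralizer [FiniteDimensional K V] {ι : Type*} [Fintype ι]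
    [DecidableEq K] (b : Basis ι K V) {f : End K V} {e : ι → K}
    (he : ∀ i, f (b i) = e i • b i) :
    Fintype.card {p : ι × ι // e p.1 = e p.2} ≤
      finrank K (Subalgebra.centralizer K {f}) := by
  classical
  have hcomm (p : {p : ι × ι // e p.1 = e p.2}) :
      b.linearMap b p ∈ Subalgebra.centralizer K {f} := by
    obtain ⟨⟨i, j⟩, hij : e i = e j⟩ := p
    refine (Subalgebra.mem_centralizer_iff K).mpr fun _ hg => ?_
    obtain rfl := Set.mem_singleton_iff.mp hg
    refine b.ext fun k => ?_
    rcases eq_or_ne j k with rfl | hjk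
    · simp [Basis.linearMap_apply_apply, he, hij]
    · simp [Basis.linearMap_apply_apply, he, hjk]
  have hli : LinearIndependent K fun p => (⟨_, hcomm p⟩ : Subalgebra.centralizer K {f}) :=
    .of_comp (Subalgebra.centralizer K {f}).val.toLinearMap <|
      (b.linearMap b).linearIndependent.comp _ Subtype.val_injective
  exact hli.fintype_card_le_finrank

lemma ncard_spectrum_le_natDegree [FiniteDimensional K V] {f : End K V} {p : Polynomial K}
    (hp : p ≠ 0) (hfp : Polynomial.aeval f p = 0) :
    (spectrum K f).ncard ≤ p.natDegree := by
  refine (Set.ncard_le_ncard (fun μ hμ => ?_) (p.rootSet_finite K)).trans (p.ncard_rootSet_le K)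
  have hroot := End.isRoot_of_hasEigenvalue (End.hasEigenvalue_iff_mem_spectrum.mpr hμ)
  simpa [Polynomial.mem_rootSet, hp] using hroot.dvd (minpoly.dvd K f hfp)

lemma ncard_spectrum_le_finrank [FiniteDimensional K V] (f : End K V) :
    (spectrum K f).ncard ≤ finrank K V :=
  (ncard_spectrum_le_natDegree f.charpoly_monic.ne_zero f.aeval_self_charpoly).trans_eq
    f.charpoly_natDegree

variable [IsAlgClosed K] [FiniteDimensional K V]

lemma exists_basis_eigenvectors {f : End K V} (hf : f.IsSemisimple) :
    ∃ (ι : Type v) (_ : Fintype ι) (b : Basis ι K V) (e : ι → K), ∀ i, f (b i) = e i • b i := by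
  have hspan : ⊤ ≤ Submodule.span K {v : V | ∃ μ : K, f v = μ • v} := by
    rw [← hf.iSup_eigenspace_eq_top]
    exact iSup_le fun μ v hv => Submodule.subset_span ⟨μ, End.mem_eigenspace_iff.mp hv⟩
  let b := Basis.ofSpan hspan
  have heigen (i) : ∃ μ : K, f (b i) = μ • b i := Basis.ofSpan_subset hspan ⟨i, rfl⟩
  choose e he using heigen
  exact ⟨_, FiniteDimensional.fintypeBasisIndex b, b, e, he⟩

theorem finrank_sq_le_ncard_spectrum_mul_finrank_centralizer {f : End K V}
    (hf : f.IsSemisimple) :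
    finrank K V ^ 2 ≤ (spectrum K f).ncard * finrank K (Subalgebra.centralizer K {f}) := by
  classical
  obtain ⟨ι, _, b, e, he⟩ := exists_basis_eigenvectors hf
  have he_mem (i : ι) : e i ∈ spectrum K f :=
    End.HasEigenvalue.mem_spectrum <| End.hasEigenvalue_of_hasEigenvector
      ⟨End.mem_eigenspace_iff.mpr (he i), b.ne_zero i⟩
  have himage : (Finset.univ.image e).card ≤ (spectrum K f).ncard := by
    rw [← Set.ncard_coe_finset]
    exact Set.ncard_le_ncard (by simpa [Set.range_subset_iff] using he_mem) (End.finite_spectrum f)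
  calc finrank K V ^ 2 = Fintype.card ι ^ 2 := by rw [finrank_eq_card_basis b]
    _ ≤ _ := card_sq_le_card_image_mul_card_fiberPairs e
    _ ≤ _ := Nat.mul_le_mul himage (card_fiberPairs_le_finrank_centralizer b he)

theorem finrank_sq_le_natDegree_mul_finrank_centralizer {f : End K V} {p : Polynomial K}
    (hp : Squarefree p) (hfp : Polynomial.aeval f p = 0) :
    finrank K V ^ 2 ≤ p.natDegree * finrank K (Subalgebra.centralizer K {f}) :=
  (finrank_sq_le_ncard_spectrum_mul_finrank_centralizer
    (End.isSemisimple_of_squarefree_aeval_eq_zero hp hfp)).trans <|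
      Nat.mul_le_mul_right _ (ncard_spectrum_le_natDegree hp.ne_zero hfp)

end Centralizer

section Scott

variable {G K W : Type*} [Group G] [Field K] [AddCommGroup W] [Module K W]
  (σ : Representation K G W)

lemma eigenspace_one_inf_eigenspace_one_le_invariants {g h : G}
    (hgh : Subgroup.closure {g, h} = ⊤) :
    End.eigenspace (σ g) 1 ⊓ End.eigenspace (σ h) 1 ≤ σ.invariants := by
  intro w hw
  simp only [Submodule.mem_inf, End.mem_eigenspace_iff, one_smul] at hw
  have hle : Subgroup.closure {g, h} ≤
      { carrier := {x | σ x w = w}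
        one_mem' := by simp
        mul_mem' := fun {x y} hx hy => by simp_all
        inv_mem' := fun {x} hx => by simpa using (congrArg (σ x⁻¹) hx).symm } := by
    simpa [Subgroup.closure_le, Set.insert_subset_iff] using hw
  exact fun x => hle (hgh ▸ Subgroup.mem_top x)

lemma dualAnnihilator_range_sub_one_le_eigenspace_dual_one (g : G) :
    (LinearMap.range (σ g - 1)).dualAnnihilator ≤ End.eigenspace (σ.dual g) 1 := by
  intro φ hφ
  rw [End.mem_eigenspace_iff, one_smul]
  ext w
  have h : φ ((σ g - 1) (σ g⁻¹ w)) = 0 := (Submodule.mem_dualAnnihilator φ).mp hφ _ ⟨_, rfl⟩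
  rw [LinearMap.sub_apply, End.one_apply, Representation.self_inv_apply, map_sub,
    sub_eq_zero] at h
  exact h.symm

lemma map_sub_one_eigenspace_mul_one_le_range_inf_range (g h : G) :
    (End.eigenspace (σ (g * h)) 1).map (σ h - 1) ≤
      LinearMap.range (σ g - 1) ⊓ LinearMap.range (σ h - 1) := by
  rintro _ ⟨w, hw, rfl⟩
  have hgh : σ h w = σ g⁻¹ w := by
    rw [SetLike.mem_coe, End.mem_eigenspace_iff, one_smul, map_mul, End.mul_apply] at hw
    nth_rw 2 [← hw]
    rw [Representation.inv_self_apply]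
  refine ⟨⟨-σ g⁻¹ w, ?_⟩, ⟨w, rfl⟩⟩
  simp only [hgh, map_neg, LinearMap.sub_apply, Representation.self_inv_apply, End.one_apply,
    neg_sub]

lemma eigenspace_mul_one_inf_ker_sub_one_le_invariants {g h : G}
    (hgh : Subgroup.closure {g, h} = ⊤) :
    End.eigenspace (σ (g * h)) 1 ⊓ LinearMap.ker (σ h - 1) ≤ σ.invariants := by
  refine le_trans (fun w hw => ?_) (eigenspace_one_inf_eigenspace_one_le_invariants σ hgh)
  have hw_h : σ h w = w := by simpa [sub_eq_zero] using hw.2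
  have hw_gh : σ g (σ h w) = w := by simpa using hw.1
  rw [hw_h] at hw_gh
  exact ⟨by simpa using hw_gh, by simpa using hw_h⟩

lemma dualAnnihilator_range_sub_one_sup_le_dual_invariants {g h : G}
    (hgh : Subgroup.closure {g, h} = ⊤) :
    (LinearMap.range (σ g - 1) ⊔ LinearMap.range (σ h - 1)).dualAnnihilator ≤
      σ.dual.invariants := by
  rw [Submodule.dualAnnihilator_sup_eq]
  exact (inf_le_inf (dualAnnihilator_range_sub_one_le_eigenspace_dual_one σ g)
    (dualAnnihilator_range_sub_one_le_eigenspace_dual_one σ h)).trans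
      (eigenspace_one_inf_eigenspace_one_le_invariants σ.dual hgh)

variable [FiniteDimensional K W]

lemma finrank_map_add_finrank_inf_ker (f : End K W) (p : Submodule K W) :
    finrank K (p.map f) + finrank K (p ⊓ LinearMap.ker f : Submodule K W) = finrank K p := by
  rw [← LinearMap.range_domRestrict, ← Submodule.map_comap_subtype,
    Submodule.finrank_map_subtype_eq, ← LinearMap.ker_domRestrict]
  exact (f.domRestrict p).finrank_range_add_finrank_ker

lemma finrank_range_sub_one_add_finrank_eigenspace_one (f : End K W) :
    finrank K (LinearMap.range (f - 1)) + finrank K (End.eigenspace f 1) = finrank K W := by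
  rw [End.eigenspace_def, one_smul, LinearMap.finrank_range_add_finrank_ker]

theorem scott_inequality {g h : G} (hgh : Subgroup.closure {g, h} = ⊤) :
    finrank K (End.eigenspace (σ g) 1) + finrank K (End.eigenspace (σ h) 1) +
      finrank K (End.eigenspace (σ (g * h)) 1) ≤
      finrank K W + finrank K σ.invariants + finrank K σ.dual.invariants := by
  have hmap := Submodule.finrank_mono (map_sub_one_eigenspace_mul_one_le_range_inf_range σ g h)
  have hker := Submodule.finrank_mono (eigenspace_mul_one_inf_ker_sub_one_le_invariants σ hgh)
  have hdual := Submodule.finrank_mono (dualAnnihilator_range_sub_one_sup_le_dual_invariants σ hgh)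
  have hgh_add :=
    finrank_map_add_finrank_inf_ker (σ h - 1) (End.eigenspace (σ (g * h)) 1)
  have hg_add := finrank_range_sub_one_add_finrank_eigenspace_one (σ g)
  have hh_add := finrank_range_sub_one_add_finrank_eigenspace_one (σ h)
  have hsup_inf := Submodule.finrank_sup_add_finrank_inf_eq
    (LinearMap.range (σ g - 1)) (LinearMap.range (σ h - 1))
  have hann := Subspace.finrank_add_finrank_dualAnnihilator_eq
    (LinearMap.range (σ g - 1) ⊔ LinearMap.range (σ h - 1))
  omega

end Scott

section TracePairing

variable {G K V : Type*} [Group G] [Field K] [AddCommGroup V] [Module K V]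

variable (K V) in
/-- The trace form `(f, m) ↦ tr (f * m)` on `End V`, as a map from `End V` to its dual. If `V`
is finite-dimensional, it identifies the conjugation representation on `End V` with its dual. -/
noncomputable def tracePairing : End K V →ₗ[K] Dual K (End K V) :=
  (LinearMap.mul K (End K V)).compr₂ (LinearMap.trace K V)

lemma tracePairing_apply (f m : End K V) :
    tracePairing K V f m = LinearMap.trace K V (f * m) := rfl

lemma tracePairing_linHom (ρ : Representation K G V) (g : G) (f : End K V) :
    tracePairing K V (Representation.linHom ρ ρ g f) =
      (Representation.linHom ρ ρ).dual g (tracePairing K V f) := by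
  ext m
  have hcycle := LinearMap.trace_mul_comm K (ρ g) (f * ρ g⁻¹ * m)
  simpa [tracePairing_apply, Module.Dual.transpose_apply, ← End.mul_eq_comp, mul_assoc]
    using hcycle

variable [FiniteDimensional K V]

lemma tracePairing_injective : Function.Injective (tracePairing K V) := by
  rw [injective_iff_map_eq_zero]
  intro f hf
  ext v
  rw [LinearMap.zero_apply, ← Module.forall_dual_apply_eq_zero_iff K]
  intro φ
  have hcomp : f * φ.smulRight v = φ.smulRight (f v) := by ext; simp
  rw [← LinearMap.trace_smulRight, ← hcomp, ← tracePairing_apply, hf, LinearMap.zero_apply]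

lemma tracePairing_surjective : Function.Surjective (tracePairing K V) :=
  (LinearMap.injective_iff_surjective_of_finrank_eq_finrank
    Subspace.dual_finrank_eq.symm).mp tracePairing_injective

lemma finrank_dual_invariants_linHom_le (ρ : Representation K G V) :
    finrank K (Representation.linHom ρ ρ).dual.invariants ≤
      finrank K (Representation.linHom ρ ρ).invariants := by
  refine (Submodule.finrank_mono fun φ hφ => ?_).trans
    (Submodule.finrank_map_le (tracePairing K V) _)
  obtain ⟨f, rfl⟩ := tracePairing_surjective φ
  exact ⟨f, fun g => tracePairing_injective ((tracePairing_linHom ρ g f).trans (hφ g)), rfl⟩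

end TracePairing

section Irreducible

variable {G K V : Type*} [Group G] [Field K] [AddCommGroup V] [Module K V]
  (ρ : Representation K G V)

lemma eigenspace_linHom_one_eq_centralizer (g : G) :
    End.eigenspace (Representation.linHom ρ ρ g) 1 =
      Subalgebra.toSubmodule (Subalgebra.centralizer K {ρ g}) := by
  ext f
  have hinv : ρ g⁻¹ * ρ g = 1 := by rw [← map_mul, inv_mul_cancel, map_one]
  have hinv' : ρ g * ρ g⁻¹ = 1 := by rw [← map_mul, mul_inv_cancel, map_one]
  simp only [End.mem_eigenspace_iff, one_smul, Subalgebra.mem_toSubmodule,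
    Subalgebra.mem_centralizer_iff, Set.mem_singleton_iff, forall_eq,
    Representation.linHom_apply, ← End.mul_eq_comp]
  constructor <;> intro h
  · nth_rw 2 [← h]
    simp only [mul_assoc, hinv, mul_one]
  · rw [← mul_assoc, h, mul_assoc, hinv', mul_one]

lemma finrank_eigenspace_linHom_one (g : G) :
    finrank K (End.eigenspace (Representation.linHom ρ ρ g) 1) =
      finrank K (Subalgebra.centralizer K {ρ g}) := by
  rw [eigenspace_linHom_one_eq_centralizer, Subalgebra.finrank_toSubmodule]

variable [IsAlgClosed K] [FiniteDimensional K V] [ρ.IsIrreducible]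

lemma finrank_invariants_linHom_eq_one :
    finrank K (Representation.linHom ρ ρ).invariants = 1 := by
  rw [(Representation.invariantsEquivIntertwiningMap ρ ρ).finrank_eq,
    Representation.IsIrreducible.finrank_intertwiningMap_self]

theorem finrank_centralizer_add_le {g h : G} (hgh : Subgroup.closure {g, h} = ⊤) :
    finrank K (Subalgebra.centralizer K {ρ g}) + finrank K (Subalgebra.centralizer K {ρ h}) +
      finrank K (Subalgebra.centralizer K {ρ (g * h)}) ≤ finrank K V ^ 2 + 2 := by
  calc _ = _ := by simp only [← finrank_eigenspace_linHom_one]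
    _ ≤ _ := scott_inequality (Representation.linHom ρ ρ) hgh
    _ ≤ finrank K (End K V) + 1 + 1 := by
      have hdual := finrank_dual_invariants_linHom_le ρ
      rw [finrank_invariants_linHom_eq_one] at hdual ⊢
      exact Nat.add_le_add_left hdual _
    _ = finrank K V ^ 2 + 2 := by rw [finrank_linearMap, sq]

lemma exists_eq_algebraMap_of_mem_center {g : G} (hg : g ∈ Subgroup.center G) :
    ∃ c : K, ρ g = algebraMap K (End K V) c := by
  obtain ⟨c, hc⟩ :=
    (Representation.IsIrreducible.algebraMap_intertwiningMap_bijective_of_isAlgClosed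
      (ρ := ρ)).2 (Representation.IntertwiningMap.centralMul ρ g hg)
  exact ⟨c, congrArg Representation.IntertwiningMap.toLinearMap hc.symm⟩

theorem finrank_sq_le_mul_finrank_centralizer_of_pow_mem_center {g : G} {k : ℕ}
    (hk : (k : K) ≠ 0) (hg : g ^ k ∈ Subgroup.center G) :
    finrank K V ^ 2 ≤ k * finrank K (Subalgebra.centralizer K {ρ g}) := by
  obtain ⟨c, hc⟩ := exists_eq_algebraMap_of_mem_center ρ hg
  have : Nontrivial V := IsSimpleModule.nontrivial (MonoidAlgebra K G) ρ.asModule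
  have hc_ne : c ≠ 0 := by
    rintro rfl
    simpa [hc] using (Group.isUnit (g ^ k)).map ρ
  have haeval : Polynomial.aeval (ρ g) (Polynomial.X ^ k - Polynomial.C c) = 0 := by
    simp [← hc]
  have hbound := finrank_sq_le_natDegree_mul_finrank_centralizer
    (Polynomial.separable_X_pow_sub_C c hk hc_ne).squarefree haeval
  rwa [Polynomial.natDegree_X_pow_sub_C] at hbound

end Irreducible

section Main

variable {G K V : Type*} [Group G] [Field K] [AddCommGroup V] [Module K V]

lemma isSemisimple_apply_of_finite [Finite G] [CharZero K] (ρ : Representation K G V) (g : G) :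
    End.IsSemisimple (ρ g) := by
  have hsep := Polynomial.separable_X_pow_sub_C (1 : K)
    (Nat.cast_ne_zero.mpr (Nat.card_pos (α := G)).ne') one_ne_zero
  have hpow : ρ g ^ Nat.card G = 1 := by rw [← map_pow, pow_card_eq_one', map_one]
  exact End.isSemisimple_of_squarefree_aeval_eq_zero hsep.squarefree (by simp [hpow])

variable [IsAlgClosed K] [FiniteDimensional K V]

theorem stmt3_general [NeZero (2 : K)] [NeZero (3 : K)] {s t : G}
    (hst : Subgroup.closure {s, t} = ⊤) (hs : s ^ 2 ∈ Subgroup.center G)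
    (hs_mul_t : (s * t) ^ 3 ∈ Subgroup.center G) (ρ : Representation K G V) [ρ.IsIrreducible]
    (ht : End.IsSemisimple (ρ t)) (h3 : (spectrum K (ρ t)).ncard ≤ 3) :
    finrank K V = (spectrum K (ρ t)).ncard := by
  have hcard_le := ncard_spectrum_le_finrank (ρ t)
  have hsum := finrank_centralizer_add_le ρ hst
  have hs_bound := finrank_sq_le_mul_finrank_centralizer_of_pow_mem_center ρ (k := 2)
    (by exact_mod_cast two_ne_zero) hs
  have hst_bound := finrank_sq_le_mul_finrank_centralizer_of_pow_mem_center ρ (k := 3)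
    (by exact_mod_cast three_ne_zero) hs_mul_t
  have ht_bound : finrank K V ^ 2 ≤
      (spectrum K (ρ t)).ncard * finrank K (Subalgebra.centralizer K {ρ t}) :=
    finrank_sq_le_ncard_spectrum_mul_finrank_centralizer ht
  refine hcard_le.antisymm' (le_of_not_gt fun hlt => ?_)
  have hsq : ((spectrum K (ρ t)).ncard + 1) ^ 2 ≤ finrank K V ^ 2 := Nat.pow_le_pow_left hlt 2
  generalize finrank K V ^ 2 = D at *
  generalize (spectrum K (ρ t)).ncard = k at *
  interval_cases k <;> omega

end Main

lemma IsIrreducibleRep.isIrreducible {G V : Type} [Group G] [AddCommGroup V] [Module ℂ V]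
    {ρ : Representation ℂ G V} (hρ : IsIrreducibleRep ρ) : ρ.IsIrreducible where
  exists_pair_ne :=
    have := hρ.1
    ⟨⊥, ⊤, fun h => bot_ne_top (congrArg Subrepresentation.toSubmodule h)⟩
  eq_bot_or_eq_top p :=
    (hρ.2 p.toSubmodule fun g => Submodule.map_le_iff_le_comap.mpr (p.apply_mem_toSubmodule g)).imp
      (fun h => Subrepresentation.toSubmodule_injective h)
      (fun h => Subrepresentation.toSubmodule_injective h)

lemma map_T_eq_tGen (n : ℕ) : (ModularGroup.T : SL2 n) = tGen n := by
  have htGen : (tGen n : Matrix (Fin 2) (Fin 2) (ZMod n)) = !![1, 1; 0, 1] := rfl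
  ext i j
  fin_cases i <;> fin_cases j <;> simp [htGen, ModularGroup.coe_T]

/-- If `ρ` is an irreducible finite-dimensional complex representation of `SL(2, ℤ/nℤ)`
with at most three distinct `t`-eigenvalues, then the dimension of `ρ` equals the number
of distinct eigenvalues of `ρ(t)`, i.e. the `t`-spectrum is multiplicity-free. -/
theorem stmt3 (n : ℕ) (hn : 1 ≤ n)
    (V : Type) [AddCommGroup V] [Module ℂ V] [FiniteDimensional ℂ V]
    (ρ : Representation ℂ (SL2 n) V)
    (hirr : IsIrreducibleRep ρ)
    (h3 : (spectrum ℂ (ρ (tGen n))).ncard ≤ 3) :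
    Module.finrank ℂ V = (spectrum ℂ (ρ (tGen n))).ncard := by
  have : NeZero n := ⟨Nat.one_le_iff_ne_zero.mp hn⟩
  have := hirr.isIrreducible
  rw [← map_T_eq_tGen] at h3 ⊢
  exact stmt3_general (closure_map_S_map_T_eq_top (ZMod.ringHom_surjective _))
    map_S_sq_mem_center map_S_mul_map_T_pow_three_mem_center ρ
    (isSemisimple_apply_of_finite ρ _) h3
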